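/- arXiv:2109.14504 — 2 statements merged into one kernel-verified Lean document; each statement's English description precedes it below -/
import Mathlib

section
/- Let 0 < p ≤ 1, p < q ≤ 2, and λ > 0, and set σ_j = j^{−λ} for j ∈ ℕ. There exist constants D, K ∈ (0,∞), with K depending only on p, q and λ, such that for all m ∈ ℕ and all 1 ≤ n < m satisfying n ≥ D·log(e·m/n), the Gelfand numbers of the diagonal operator D_σ : ℓ_p^m → ℓ_q^m satisfy c_n(D_σ : ℓ_p^m → ℓ_q^m) ≤ K·(log(e·m/n)/n)^{λ + 1/p − 1/q}. -/
open scoped ENNReal NNReal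

/-- The `ℓ_p`-(quasi-)norm on `ℝ^m`, for `0 < p ≤ ∞`. -/
noncomputable def lpnorm (p : ℝ≥0∞) {m : ℕ} (x : Fin m → ℝ) : ℝ :=
  if p = ∞ then ⨆ j, |x j| else (∑ j, |x j| ^ p.toReal) ^ (1 / p.toReal)

/-- The `n`-th Gelfand number of the diagonal operator `D_σ : ℓ_p^m → ℓ_q^m`:
the infimum over all linear subspaces `E ⊆ ℝ^m` of codimension at most `n - 1` of
`sup {‖D_σ x‖_q : x ∈ B_p^m ∩ E}`. -/
noncomputable def gelfandFin (p q : ℝ≥0∞) {m : ℕ} (σ : Fin m → ℝ) (n : ℕ) : ℝ :=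
  sInf { t | ∃ E : Submodule ℝ (Fin m → ℝ),
      Module.finrank ℝ ((Fin m → ℝ) ⧸ E) ≤ n - 1 ∧
      t = sSup ((fun x => lpnorm q (fun j => σ j * x j)) ''
        {x : Fin m → ℝ | lpnorm p x ≤ 1 ∧ x ∈ E}) }


noncomputable def sgnB (b : Bool) : ℝ := if b then 1 else -1
noncomputable def XX {m : ℕ} (ω : Fin m → Bool) (x : Fin m → ℝ) : ℝ := ∑ j, sgnB (ω j) * x j

lemma sum_prod_bool {R : Type*} [CommRing R] {m : ℕ} (f : Fin m → Bool → R) :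
    ∑ ω : Fin m → Bool, ∏ j, f j (ω j) = ∏ j, (f j true + f j false) := by
  have := Finset.prod_univ_sum (fun _ : Fin m => (Finset.univ : Finset Bool)) f
  rw [Fintype.piFinset_univ] at this
  rw [← this]
  simp

lemma sum_exp {m : ℕ} (x : Fin m → ℝ) :
    ∑ ω, Real.exp (XX ω x) = 2 ^ m * ∏ j, Real.cosh (x j) := by
  have h := sum_prod_bool (fun j b => Real.exp (sgnB b * x j))
  simp only [XX, Real.exp_sum]
  rw [h]
  have : (2:ℝ) ^ m = ∏ _j : Fin m, 2 := by simp
  rw [this, ← Finset.prod_mul_distrib]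
  refine Finset.prod_congr rfl fun j _ => ?_
  rw [Real.cosh_eq]; simp [sgnB]; ring

lemma sum_cos {m : ℕ} (x : Fin m → ℝ) :
    ∑ ω, Real.cos (XX ω x) = 2 ^ m * ∏ j, Real.cos (x j) := by
  have h := sum_prod_bool (fun j b => Complex.exp ((sgnB b * x j : ℝ) * Complex.I))
  have h1 : ∀ ω : Fin m → Bool, Real.cos (XX ω x) =
      (∏ j, Complex.exp ((sgnB (ω j) * x j : ℝ) * Complex.I)).re := by
    intro ω
    rw [← Complex.exp_sum, ← Finset.sum_mul, ← Complex.ofReal_sum, Complex.exp_ofReal_mul_I_re]; rfl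
  simp only [h1]
  rw [← Complex.re_sum, h]
  have h2 : ∏ j, (Complex.exp ((sgnB true * x j : ℝ) * Complex.I) + Complex.exp ((sgnB false * x j : ℝ) * Complex.I)) = ((2 ^ m * ∏ j, Real.cos (x j) : ℝ) : ℂ) := by
    have : (2:ℝ) ^ m = ∏ _j : Fin m, 2 := by simp
    rw [this, ← Finset.prod_mul_distrib, Complex.ofReal_prod]
    refine Finset.prod_congr rfl fun j _ => ?_
    push_cast
    rw [Complex.cos]; simp [sgnB]; ring
  rw [h2, Complex.ofReal_re]

lemma sum_exp_abs {m : ℕ} (x : Fin m → ℝ) (hx : ∑ j, x j ^ 2 = 1) :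
    ∑ ω, Real.exp (|XX ω x|) ≤ 2 ^ m * Real.exp (3 / 2) := by
  have hle : ∀ y : Fin m → ℝ, ∑ j, y j ^ 2 = 1 → ∑ ω, Real.exp (XX ω y) ≤ 2 ^ m * Real.exp (1/2) := by
    intro y hy
    rw [sum_exp]
    gcongr
    calc ∏ j, Real.cosh (y j) ≤ ∏ j, Real.exp (y j ^ 2 / 2) :=
          Finset.prod_le_prod (fun j _ => (Real.cosh_pos _).le) (fun j _ => Real.cosh_le_exp_half_sq _)
      _ = Real.exp (1/2) := by rw [← Real.exp_sum, ← Finset.sum_div, hy]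
  have h1 := hle x hx
  have h2 := hle (-x) (by simpa using hx)
  have h3 : ∀ ω : Fin m → Bool, XX ω (-x) = - XX ω x := by intro ω; simp [XX]
  simp only [h3] at h2
  have h4 : ∑ ω, Real.exp (|XX ω x|) ≤ ∑ ω, (Real.exp (XX ω x) + Real.exp (-XX ω x)) := by
    refine Finset.sum_le_sum fun ω _ => ?_
    rcases abs_cases (XX ω x) with h | h <;> rw [h.1] <;> linarith [Real.exp_pos (XX ω x), Real.exp_pos (-XX ω x)]
  rw [Finset.sum_add_distrib] at h4
  have h5 : Real.exp (3/2) = Real.exp 1 * Real.exp (1/2) := by rw [← Real.exp_add]; norm_num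
  have h6 : (2:ℝ) ≤ Real.exp 1 := by linarith [Real.add_one_le_exp (1:ℝ)]
  have h7 : 2 * (2 ^ m * Real.exp (1/2)) ≤ Real.exp 1 * (2 ^ m * Real.exp (1/2)) := by gcongr
  rw [h5]; nlinarith

lemma cos_le_aux (x : ℝ) (hx : |x| ≤ 1) : 0 ≤ Real.cos x ∧ Real.cos x ≤ Real.exp (-(x^2/3)) := by
  have hb := abs_le.1 (Real.cos_bound hx)
  have h1 : |x|^4 = x^2 * x^2 := by rw [show |x|^4 = (|x|^2)^2 by ring, sq_abs]; ring
  have h2 : x^2 ≤ 1 := by rw [← sq_abs]; nlinarith [abs_nonneg x]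
  have := Real.add_one_le_exp (-(x^2/3))
  rw [h1] at hb
  constructor <;> nlinarith [sq_nonneg x]

lemma exp_neg_aux (u : ℝ) (hu : 0 ≤ u) : Real.exp (-u) ≤ 1 - (1 - Real.cos u) / 4 := by
  have h1 : Real.exp (-u) ≤ 1 / (1 + u) := by
    rw [Real.exp_neg, ← one_div]
    exact one_div_le_one_div_of_le (by linarith) (by linarith [Real.add_one_le_exp u])
  refine h1.trans ?_
  rw [div_le_iff₀ (by linarith)]
  rcases le_total u 1 with h | h
  · have := Real.one_sub_sq_div_two_le_cos (x := u)
    nlinarith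
  · have := Real.neg_one_le_cos u
    nlinarith

lemma sum_exp_neg_abs {m : ℕ} (x : Fin m → ℝ) (hx : ∑ j, x j ^ 2 = 1) :
    ∑ ω, Real.exp (-|XX ω x|) ≤ 2 ^ m * Real.exp (-(1/16)) := by
  have hj : ∀ j, |x j| ≤ 1 := by
    intro j
    have := Finset.single_le_sum (f := fun j => x j ^ 2) (fun i _ => sq_nonneg _) (Finset.mem_univ j)
    rw [hx] at this
    exact abs_le_one_iff_mul_self_le_one.2 (by simpa [sq] using this)
  have hc : ∏ j, Real.cos (x j) ≤ 3/4 := by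
    calc ∏ j, Real.cos (x j) ≤ ∏ j, Real.exp (-(x j ^ 2 / 3)) :=
          Finset.prod_le_prod (fun j _ => (cos_le_aux _ (hj j)).1) (fun j _ => (cos_le_aux _ (hj j)).2)
      _ = Real.exp (-(1/3)) := by rw [← Real.exp_sum, Finset.sum_neg_distrib, ← Finset.sum_div, hx]
      _ ≤ 3/4 := by
        rw [Real.exp_neg]
        have := Real.add_one_le_exp (1/3 : ℝ)
        rw [inv_le_comm₀ (Real.exp_pos _) (by norm_num)]
        linarith
  have h1 : ∑ ω, Real.exp (-|XX ω x|) ≤ ∑ ω, (3/4 + (1/4) * Real.cos (XX ω x)) := by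
    refine Finset.sum_le_sum fun ω _ => ?_
    have := exp_neg_aux _ (abs_nonneg (XX ω x))
    rw [Real.cos_abs] at this
    linarith
  rw [Finset.sum_add_distrib, ← Finset.mul_sum, sum_cos] at h1
  simp at h1
  have h2 : (15/16 : ℝ) ≤ Real.exp (-(1/16)) := by
    have := Real.add_one_le_exp (-(1/16) : ℝ); linarith
  have h3 : (0:ℝ) < 2 ^ m := by positivity
  nlinarith

/-- Markov / Chernoff for product -/
lemma chernoff {Ω : Type*} [Fintype Ω] (N : ℕ) (g : Ω → ℝ) (T M : ℝ)
    (hM : ∑ ω, Real.exp (g ω) ≤ Fintype.card Ω * Real.exp M) (hMT : N * M - T ≤ - (N / 50)) :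
    (((Finset.univ.filter (fun A : Fin N → Ω => T ≤ ∑ i, g (A i))).card : ℕ) : ℝ) ≤
      Fintype.card (Fin N → Ω) * Real.exp (-(N / 50)) := by
  classical
  have h1 : (((Finset.univ.filter (fun A : Fin N → Ω => T ≤ ∑ i, g (A i))).card : ℕ) : ℝ) * Real.exp T
      ≤ (∑ ω, Real.exp (g ω)) ^ N := by
    rw [Fintype.sum_pow]
    rw [← nsmul_eq_mul, ← Finset.sum_const]
    calc _ ≤ ∑ A ∈ Finset.univ.filter (fun A : Fin N → Ω => T ≤ ∑ i, g (A i)), ∏ i, Real.exp (g (A i)) := by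
          refine Finset.sum_le_sum fun A hA => ?_
          rw [← Real.exp_sum]
          exact Real.exp_le_exp.2 (Finset.mem_filter.1 hA).2
      _ ≤ _ := Finset.sum_le_sum_of_subset_of_nonneg (Finset.subset_univ _)
          (fun A _ _ => Finset.prod_nonneg fun i _ => (Real.exp_pos _).le)
  have h2 : (∑ ω, Real.exp (g ω)) ^ N ≤ Fintype.card (Fin N → Ω) * Real.exp (N * M) := by
    calc _ ≤ (Fintype.card Ω * Real.exp M) ^ N :=
          pow_le_pow_left₀ (Finset.sum_nonneg fun i _ => (Real.exp_pos _).le) hM N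
      _ = _ := by rw [mul_pow, ← Real.exp_nat_mul]; simp
  have h3 := h1.trans h2
  have h4 : Real.exp (N * M) ≤ Real.exp (-(N/50)) * Real.exp T := by
    rw [← Real.exp_add]; exact Real.exp_le_exp.2 (by linarith)
  have h5 : (0:ℝ) ≤ Fintype.card (Fin N → Ω) := by positivity
  refine le_of_mul_le_mul_right (h3.trans ?_) (Real.exp_pos T)
  rw [mul_assoc]; gcongr

lemma bad_hi {m : ℕ} (N : ℕ) (x : Fin m → ℝ) (hx : 0 < ∑ j, x j ^ 2) :
    (((Finset.univ.filter (fun A : Fin N → (Fin m → Bool) =>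
      3 * N * √(∑ j, x j ^ 2) ≤ ∑ i, |XX (A i) x|)).card : ℕ) : ℝ) ≤
      Fintype.card (Fin N → (Fin m → Bool)) * Real.exp (-(N / 50)) := by
  set r := √(∑ j, x j ^ 2) with hr
  have hr0 : 0 < r := Real.sqrt_pos.2 hx
  have hy : ∑ j, (x j / r) ^ 2 = 1 := by
    simp only [div_pow]; rw [← Finset.sum_div, hr, Real.sq_sqrt hx.le, div_self hx.ne']
  have hX : ∀ ω : Fin m → Bool, XX ω (fun j => x j / r) = XX ω x / r := by
    intro ω; simp only [XX, mul_div_assoc']; rw [Finset.sum_div]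
  have := chernoff N (fun ω => |XX ω (fun j => x j / r)|) (3 * N) (3/2)
    (by simpa using sum_exp_abs _ hy) (by have : (0:ℝ) ≤ N := by positivity
                                          linarith)
  rw [Finset.filter_congr (q := fun A : Fin N → (Fin m → Bool) =>
    3 * (N:ℝ) ≤ ∑ i, |XX (A i) (fun j => x j / r)|)]
  · exact this
  intro A _
  simp only [hX, abs_div, abs_of_pos hr0]
  rw [← Finset.sum_div, le_div_iff₀ hr0]

lemma bad_lo {m : ℕ} (N : ℕ) (x : Fin m → ℝ) (hx : 0 < ∑ j, x j ^ 2) :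
    (((Finset.univ.filter (fun A : Fin N → (Fin m → Bool) =>
      ∑ i, |XX (A i) x| ≤ N / 25 * √(∑ j, x j ^ 2))).card : ℕ) : ℝ) ≤
      Fintype.card (Fin N → (Fin m → Bool)) * Real.exp (-(N / 50)) := by
  set r := √(∑ j, x j ^ 2) with hr
  have hr0 : 0 < r := Real.sqrt_pos.2 hx
  have hy : ∑ j, (x j / r) ^ 2 = 1 := by
    simp only [div_pow]; rw [← Finset.sum_div, hr, Real.sq_sqrt hx.le, div_self hx.ne']
  have hX : ∀ ω : Fin m → Bool, XX ω (fun j => x j / r) = XX ω x / r := by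
    intro ω; simp only [XX, mul_div_assoc']; rw [Finset.sum_div]
  have := chernoff N (fun ω => -|XX ω (fun j => x j / r)|) (-(N / 25)) (-(1/16))
    (by simpa using sum_exp_neg_abs _ hy) (by have : (0:ℝ) ≤ N := by positivity
                                              linarith)
  rw [Finset.filter_congr (q := fun A : Fin N → (Fin m → Bool) =>
    -((N:ℝ) / 25) ≤ ∑ i, -|XX (A i) (fun j => x j / r)|)]
  · exact this
  intro A _
  simp only [hX, abs_div, abs_of_pos hr0]
  rw [Finset.sum_neg_distrib, ← Finset.sum_div, neg_le_neg_iff, div_le_iff₀ hr0]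

lemma exists_matrix {ι : Type*} {m : ℕ} (N : ℕ) (I : Finset ι) (z : ι → Fin m → ℝ)
    (hI : 2 * (I.card : ℝ) * Real.exp (-(N / 50)) < 1) :
    ∃ A : Fin N → (Fin m → Bool), ∀ w ∈ I,
      N / 25 * √(∑ j, z w j ^ 2) ≤ ∑ i, |XX (A i) (z w)| ∧
      ∑ i, |XX (A i) (z w)| ≤ 3 * N * √(∑ j, z w j ^ 2) := by
  classical
  by_contra! hcon
  set Ω := Fin N → (Fin m → Bool)
  set B : ι → Finset Ω := fun w => if 0 < ∑ j, z w j ^ 2 then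
    (Finset.univ.filter (fun A : Ω => ∑ i, |XX (A i) (z w)| ≤ N / 25 * √(∑ j, z w j ^ 2))) ∪
    (Finset.univ.filter (fun A : Ω => 3 * N * √(∑ j, z w j ^ 2) ≤ ∑ i, |XX (A i) (z w)|)) else ∅ with hB
  have hcov : (Finset.univ : Finset Ω) ⊆ I.biUnion B := by
    intro A _
    obtain ⟨w, hw, h⟩ := hcon A
    rw [Finset.mem_biUnion]
    refine ⟨w, hw, ?_⟩
    have hpos : 0 < ∑ j, z w j ^ 2 := by
      by_contra hn
      have h0 : ∑ j, z w j ^ 2 = 0 := le_antisymm (not_lt.1 hn) (Finset.sum_nonneg fun j _ => sq_nonneg _)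
      have hz : ∀ j, z w j = 0 := by
        intro j
        have := (Finset.sum_eq_zero_iff_of_nonneg (fun j _ => sq_nonneg (z w j))).1 h0 j (Finset.mem_univ j)
        simpa using this
      simp [XX, hz] at h
    simp only [hB, if_pos hpos, Finset.mem_union, Finset.mem_filter, Finset.mem_univ, true_and]
    by_cases h1 : ∑ i, |XX (A i) (z w)| ≤ N / 25 * √(∑ j, z w j ^ 2)
    · exact Or.inl h1
    · exact Or.inr (h (not_le.1 h1).le).le
  have hBc : ∀ w ∈ I, ((B w).card : ℝ) ≤ 2 * (Fintype.card Ω * Real.exp (-(N / 50))) := by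
    intro w _
    by_cases hpos : 0 < ∑ j, z w j ^ 2
    · simp only [hB, if_pos hpos]
      refine (Nat.cast_le.2 (Finset.card_union_le _ _)).trans ?_
      push_cast
      have h1 := bad_hi N (z w) hpos
      have h2 := bad_lo N (z w) hpos
      linarith
    · simp only [hB, if_neg hpos]; simp; positivity
  have h1 : (Fintype.card Ω : ℝ) ≤ ∑ w ∈ I, ((B w).card : ℝ) := by
    rw [← Nat.cast_sum]
    exact Nat.cast_le.2 ((Finset.card_le_card hcov).trans Finset.card_biUnion_le)
  have h2 := h1.trans (Finset.sum_le_sum hBc)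
  rw [Finset.sum_const, nsmul_eq_mul] at h2
  have h3 : (0:ℝ) < Fintype.card Ω := by
    have : 0 < Fintype.card Ω := Fintype.card_pos
    exact_mod_cast this
  nlinarith

lemma count_bound (m t : ℕ) (hm : 0 < m) (ht : 0 < t) :
    (((Finset.univ.filter (fun w : Fin m × Bool → Fin (t+1) => ∑ i, (w i : ℕ) ≤ t)).card : ℕ) : ℝ) ≤
      (1 + m / t : ℝ) ^ t * Real.exp (2 * t) := by
  classical
  have hm' : (0:ℝ) < m := by exact_mod_cast hm
  have ht' : (0:ℝ) < t := by exact_mod_cast ht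
  set y : ℝ := 1 + m / t with hy
  have hy1 : 1 < y := by rw [hy]; linarith [div_pos hm' ht']
  have hy0 : 0 < y := by linarith
  set r : ℝ := y⁻¹ with hr
  have hr0 : 0 < r := by positivity
  have hr1 : r < 1 := inv_lt_one_of_one_lt₀ hy1
  have hgeo : ∑ k : Fin (t+1), r ^ (k : ℕ) ≤ Real.exp (t / m) := by
    rw [Fin.sum_univ_eq_sum_range (fun k => r ^ k)]
    have h1 := mul_neg_geom_sum r (t+1)
    have h2 : (1 - r) * ∑ k ∈ Finset.range (t+1), r ^ k ≤ (1 - r) * (1 + t / m) := by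
      rw [h1]
      have : (1 - r) * (1 + t / m : ℝ) = 1 := by
        rw [hr, hy]; field_simp; ring
      rw [this]; linarith [pow_pos hr0 (t+1)]
    have h3 := le_of_mul_le_mul_left h2 (by linarith)
    linarith [Real.add_one_le_exp (t / m : ℝ)]
  have hall : ∑ w : Fin m × Bool → Fin (t+1), ∏ i, r ^ (w i : ℕ) ≤ Real.exp (2 * t) := by
    have := Finset.prod_univ_sum (fun _ : Fin m × Bool => (Finset.univ : Finset (Fin (t+1))))
      (fun _ k => r ^ (k : ℕ))
    rw [Fintype.piFinset_univ] at this
    rw [← this, Finset.prod_const]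
    refine (pow_le_pow_left₀ (Finset.sum_nonneg fun k _ => by positivity) hgeo _).trans ?_
    rw [← Real.exp_nat_mul]
    refine Real.exp_le_exp.2 (le_of_eq ?_)
    simp; field_simp
  have h1 : (((Finset.univ.filter (fun w : Fin m × Bool → Fin (t+1) => ∑ i, (w i : ℕ) ≤ t)).card : ℕ) : ℝ)
      ≤ ∑ w ∈ Finset.univ.filter (fun w : Fin m × Bool → Fin (t+1) => ∑ i, (w i : ℕ) ≤ t),
        y ^ t * ∏ i, r ^ (w i : ℕ) := by
    rw [Finset.card_eq_sum_ones, Nat.cast_sum]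
    refine Finset.sum_le_sum fun w hw => ?_
    have hw' := (Finset.mem_filter.1 hw).2
    rw [Finset.prod_pow_eq_pow_sum, hr, inv_pow, ← div_eq_mul_inv, Nat.cast_one,
      le_div_iff₀ (by positivity), one_mul]
    exact pow_le_pow_right₀ hy1.le hw'
  refine h1.trans ?_
  rw [← Finset.mul_sum]
  gcongr
  refine le_trans ?_ hall
  exact Finset.sum_le_sum_of_subset_of_nonneg (Finset.subset_univ _)
    (fun w _ _ => Finset.prod_nonneg fun i _ => by positivity)

lemma exists_matrix' (m N t : ℕ) (hm : 0 < m) (ht : 0 < t)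
    (h : 2 * ((1 + m / t : ℝ) ^ t * Real.exp (2 * t)) * Real.exp (-(N / 50)) < 1) :
    ∃ A : Fin N → (Fin m → Bool), ∀ u v : Fin m → ℕ, ∑ j, (u j + v j) ≤ t →
      ∀ z : Fin m → ℝ, (∀ j, z j = (u j : ℝ) - v j) →
      N / 25 * √(∑ j, z j ^ 2) ≤ ∑ i, |XX (A i) z| ∧
      ∑ i, |XX (A i) z| ≤ 3 * N * √(∑ j, z j ^ 2) := by
  obtain ⟨A, hA⟩ := exists_matrix N
    (Finset.univ.filter (fun w : Fin m × Bool → Fin (t+1) => ∑ i, (w i : ℕ) ≤ t))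
    (fun w j => ((w (j, true) : ℕ) : ℝ) - ((w (j, false) : ℕ) : ℝ))
    (lt_of_le_of_lt (by gcongr; exact count_bound m t hm ht) h)
  refine ⟨A, fun u v huv z hz => ?_⟩
  have hle : ∀ j, u j + v j ≤ t := fun j =>
    (Finset.single_le_sum (f := fun j => u j + v j) (fun _ _ => Nat.zero_le _) (Finset.mem_univ j)).trans huv
  have := hA (fun i => if i.2 then ⟨u i.1, by have := hle i.1; omega⟩ else ⟨v i.1, by have := hle i.1; omega⟩)
    (by
      simp only [Finset.mem_filter, Finset.mem_univ, true_and]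
      rw [Fintype.sum_prod_type]
      simpa using huv)
  simp only [if_true, Bool.false_eq_true, if_false] at this
  have hz' : z = fun j => (u j : ℝ) - v j := funext hz
  rw [hz']; exact this

lemma lp_lemma {m : ℕ} (t : ℕ) (htm : t ≤ m) (g f : Fin m → ℝ) (hg : ∀ j, 0 ≤ g j) (hf0 : ∀ j, 0 ≤ f j)
    (hf1 : ∀ j, f j ≤ 1) (hf : ∑ j, f j ≤ t) :
    ∃ S : Finset (Fin m), S.card = t ∧ ∑ j, g j * f j ≤ ∑ j ∈ S, g j := by
  classical
  have hne : (Finset.powersetCard t (Finset.univ : Finset (Fin m))).Nonempty := by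
    rw [Finset.powersetCard_nonempty]; simpa using htm
  obtain ⟨S, hS, hmax⟩ := Finset.exists_max_image _ (fun S => ∑ j ∈ S, g j) hne
  rw [Finset.mem_powersetCard] at hS
  refine ⟨S, hS.2, ?_⟩
  have hex : ∀ i ∈ S, ∀ j ∉ S, g j ≤ g i := by
    intro i hi j hj
    have hj' : j ∉ S.erase i := fun h => hj (Finset.mem_of_mem_erase h)
    have := hmax (insert j (S.erase i)) (by
      rw [Finset.mem_powersetCard]
      refine ⟨Finset.subset_univ _, ?_⟩
      rw [Finset.card_insert_of_notMem hj', Finset.card_erase_add_one hi, hS.2])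
    rw [Finset.sum_insert hj'] at this
    have h2 := Finset.add_sum_erase S g hi
    linarith
  obtain ⟨θ, hθ0, hθ1, hθ2⟩ : ∃ θ : ℝ, 0 ≤ θ ∧ (∀ i ∈ S, θ ≤ g i) ∧ ∀ j ∈ Sᶜ, g j ≤ θ := by
    by_cases hc : Sᶜ.Nonempty
    · obtain ⟨k, hk, hkm⟩ := Finset.exists_max_image _ g hc
      exact ⟨g k, hg k, fun i hi => hex i hi k (Finset.mem_compl.1 hk), hkm⟩
    · refine ⟨0, le_rfl, fun i _ => hg i, fun j hj => absurd ⟨j, hj⟩ hc⟩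
  rw [← Finset.sum_add_sum_compl S]
  have h1 : ∑ j ∈ Sᶜ, g j * f j ≤ θ * ∑ j ∈ Sᶜ, f j := by
    rw [Finset.mul_sum]
    exact Finset.sum_le_sum fun j hj => mul_le_mul_of_nonneg_right (hθ2 j hj) (hf0 j)
  have h2 : ∑ j ∈ Sᶜ, f j ≤ ∑ j ∈ S, (1 - f j) := by
    rw [Finset.sum_sub_distrib, Finset.sum_const, hS.2]
    have := Finset.sum_add_sum_compl S f
    simp; linarith
  have h3 : θ * ∑ j ∈ S, (1 - f j) ≤ ∑ j ∈ S, g j * (1 - f j) := by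
    rw [Finset.mul_sum]
    exact Finset.sum_le_sum fun j hj => mul_le_mul_of_nonneg_right (hθ1 j hj) (by linarith [hf1 j])
  have h4 : ∑ j ∈ S, g j * (1 - f j) = ∑ j ∈ S, g j - ∑ j ∈ S, g j * f j := by
    rw [← Finset.sum_sub_distrib]; exact Finset.sum_congr rfl fun j _ => by ring
  have h5 := mul_le_mul_of_nonneg_left h2 hθ0
  linarith

lemma upper_frac {m N t : ℕ} (htm : t ≤ m) (A : Fin N → (Fin m → Bool))
    (hA : ∀ u v : Fin m → ℕ, ∑ j, (u j + v j) ≤ t →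
      ∀ z : Fin m → ℝ, (∀ j, z j = (u j : ℝ) - v j) → ∑ i, |XX (A i) z| ≤ 3 * N * √(∑ j, z j ^ 2))
    (f : Fin m → ℝ) (hf1 : ∀ j, |f j| ≤ 1) (hf : ∑ j, |f j| ≤ t) :
    ∑ i, |XX (A i) f| ≤ 3 * N * √t := by
  classical
  set τ : Fin N → ℝ := fun i => if 0 ≤ XX (A i) f then 1 else -1 with hτ
  have hτ1 : ∀ i y, τ i * y ≤ |y| := by
    intro i y
    simp only [hτ]; split_ifs
    · linarith [le_abs_self y]
    · linarith [neg_abs_le y]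
  have hτ2 : ∀ i, |XX (A i) f| = τ i * XX (A i) f := by
    intro i
    simp only [hτ]; split_ifs with h
    · rw [abs_of_nonneg h, one_mul]
    · rw [abs_of_neg (not_le.1 h)]; ring
  set g : Fin m → ℝ := fun j => ∑ i, τ i * sgnB (A i j) with hg
  have hsw : ∀ y : Fin m → ℝ, ∑ i, τ i * XX (A i) y = ∑ j, g j * y j := by
    intro y
    simp only [XX, hg, Finset.mul_sum, Finset.sum_mul]
    rw [Finset.sum_comm]
    exact Finset.sum_congr rfl fun j _ => Finset.sum_congr rfl fun i _ => by ring
  obtain ⟨S, hS, hSle⟩ := lp_lemma t htm (fun j => |g j|) (fun j => |f j|) (fun _ => abs_nonneg _)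
    (fun _ => abs_nonneg _) hf1 hf
  set u : Fin m → ℕ := fun j => if j ∈ S ∧ 0 ≤ g j then 1 else 0 with hu
  set v : Fin m → ℕ := fun j => if j ∈ S ∧ ¬ 0 ≤ g j then 1 else 0 with hv
  set z : Fin m → ℝ := fun j => (u j : ℝ) - v j with hz
  have huv : ∀ j, u j + v j = if j ∈ S then 1 else 0 := by
    intro j; simp only [hu, hv]; by_cases h1 : j ∈ S <;> by_cases h2 : 0 ≤ g j <;> simp [h1, h2]
  have hz2 : ∀ j, z j ^ 2 = if j ∈ S then 1 else 0 := by
    intro j; simp only [hz, hu, hv]; by_cases h1 : j ∈ S <;> by_cases h2 : 0 ≤ g j <;> simp [h1, h2]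
  have hgz : ∀ j, g j * z j = if j ∈ S then |g j| else 0 := by
    intro j; simp only [hz, hu, hv]
    by_cases h1 : j ∈ S <;> by_cases h2 : 0 ≤ g j
    · simp [h1, h2, abs_of_nonneg h2]
    · simp [h1, h2, abs_of_neg (not_le.1 h2)]
    · simp [h1]
    · simp [h1]
  have hfin := hA u v (by simp only [huv]; simp [hS]) z (fun _ => rfl)
  simp only [hz2] at hfin
  simp [hS] at hfin
  calc ∑ i, |XX (A i) f| = ∑ j, g j * f j := by rw [← hsw]; exact Finset.sum_congr rfl fun i _ => hτ2 i
    _ ≤ ∑ j, |g j| * |f j| := Finset.sum_le_sum fun j _ => by rw [← abs_mul]; exact le_abs_self _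
    _ ≤ ∑ j ∈ S, |g j| := hSle
    _ = ∑ j, g j * z j := by simp only [hgz]; simp
    _ = ∑ i, τ i * XX (A i) z := (hsw z).symm
    _ ≤ ∑ i, |XX (A i) z| := Finset.sum_le_sum fun i _ => hτ1 i _
    _ ≤ _ := hfin

lemma kernel_bound {m N t : ℕ} (hN : 0 < N) (htm : t ≤ m) (A : Fin N → (Fin m → Bool))
    (hA : ∀ u v : Fin m → ℕ, ∑ j, (u j + v j) ≤ t →
      ∀ z : Fin m → ℝ, (∀ j, z j = (u j : ℝ) - v j) →
      N / 25 * √(∑ j, z j ^ 2) ≤ ∑ i, |XX (A i) z| ∧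
      ∑ i, |XX (A i) z| ≤ 3 * N * √(∑ j, z j ^ 2))
    (x : Fin m → ℝ) (hx : ∀ i, XX (A i) x = 0) (hx1 : ∑ j, |x j| ≤ t) :
    ∑ j, x j ^ 2 ≤ 11252 * t := by
  set u : Fin m → ℕ := fun j => ⌊x j⌋₊ with hu
  set v : Fin m → ℕ := fun j => ⌊-x j⌋₊ with hv
  set z : Fin m → ℝ := fun j => (u j : ℝ) - v j with hz
  set f : Fin m → ℝ := fun j => x j - z j with hf
  have key : ∀ j, (u j + v j : ℝ) ≤ |x j| ∧ |f j| ≤ 1 ∧ |f j| ≤ |x j| := by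
    intro j
    simp only [hf, hz, hu, hv]
    rcases le_total 0 (x j) with h | h
    · have h1 : ⌊-x j⌋₊ = 0 := Nat.floor_of_nonpos (by linarith)
      have h2 := Nat.floor_le h
      have h3 := Nat.lt_floor_add_one (x j)
      have h4 : (0:ℝ) ≤ ⌊x j⌋₊ := by positivity
      rw [h1, abs_of_nonneg h]
      simp only [Nat.cast_zero, add_zero, sub_zero]
      rw [abs_of_nonneg (by linarith)]
      refine ⟨?_, ?_, ?_⟩ <;> linarith
    · have h1 : ⌊x j⌋₊ = 0 := Nat.floor_of_nonpos h
      have h2 := Nat.floor_le (show 0 ≤ -x j by linarith)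
      have h3 := Nat.lt_floor_add_one (-x j)
      have h4 : (0:ℝ) ≤ ⌊-x j⌋₊ := by positivity
      rw [h1, abs_of_nonpos h]
      simp only [Nat.cast_zero, zero_add, zero_sub, sub_neg_eq_add]
      rw [abs_of_nonpos (by linarith)]
      refine ⟨?_, ?_, ?_⟩ <;> linarith
  have huv : ∑ j, (u j + v j) ≤ t := by
    have : ((∑ j, (u j + v j) : ℕ) : ℝ) ≤ t := by
      push_cast
      exact (Finset.sum_le_sum fun j _ => (key j).1).trans hx1
    exact_mod_cast this
  have hlow := (hA u v huv z (fun _ => rfl)).1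
  have hfs : ∑ j, |f j| ≤ t := (Finset.sum_le_sum fun j _ => (key j).2.2).trans hx1
  have hup := upper_frac htm A (fun u v h z hz => (hA u v h z hz).2) f (fun j => (key j).2.1) hfs
  have heq : ∀ i, XX (A i) f = - XX (A i) z := by
    intro i
    have : XX (A i) f = XX (A i) x - XX (A i) z := by
      simp only [XX, hf]; rw [← Finset.sum_sub_distrib]
      exact Finset.sum_congr rfl fun j _ => by ring
    rw [this, hx i, zero_sub]
  simp only [heq, abs_neg] at hup
  have hN' : (0:ℝ) < N := by exact_mod_cast hN
  have h1 : √(∑ j, z j ^ 2) ≤ 75 * √t := by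
    have h2 := hlow.trans hup
    have : N * √(∑ j, z j ^ 2) ≤ N * (75 * √t) := by linarith
    exact le_of_mul_le_mul_left this hN'
  have h3 : ∑ j, z j ^ 2 ≤ 5625 * t := by
    have h4 := Real.sq_sqrt (show 0 ≤ ∑ j, z j ^ 2 from Finset.sum_nonneg fun j _ => sq_nonneg _)
    have h5 := Real.sq_sqrt (show (0:ℝ) ≤ t by positivity)
    have h6 := pow_le_pow_left₀ (Real.sqrt_nonneg _) h1 2
    rw [mul_pow, h4, h5] at h6
    linarith
  have h7 : ∑ j, f j ^ 2 ≤ t := by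
    refine (Finset.sum_le_sum fun j _ => ?_).trans hfs
    rw [← sq_abs]
    nlinarith [abs_nonneg (f j), (key j).2.1]
  have h8 : ∑ j, x j ^ 2 ≤ ∑ j, (2 * z j ^ 2 + 2 * f j ^ 2) := by
    refine Finset.sum_le_sum fun j _ => ?_
    simp only [hf]
    nlinarith [sq_nonneg (x j - 2 * z j)]
  rw [Finset.sum_add_distrib, ← Finset.mul_sum, ← Finset.mul_sum] at h8
  linarith

lemma kernel_bound' {m N t : ℕ} (hN : 0 < N) (ht : 0 < t) (htm : t ≤ m) (A : Fin N → (Fin m → Bool))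
    (hA : ∀ u v : Fin m → ℕ, ∑ j, (u j + v j) ≤ t →
      ∀ z : Fin m → ℝ, (∀ j, z j = (u j : ℝ) - v j) →
      N / 25 * √(∑ j, z j ^ 2) ≤ ∑ i, |XX (A i) z| ∧
      ∑ i, |XX (A i) z| ≤ 3 * N * √(∑ j, z j ^ 2))
    (x : Fin m → ℝ) (hx : ∀ i, XX (A i) x = 0) :
    ∑ j, x j ^ 2 ≤ 11252 / t * (∑ j, |x j|) ^ 2 := by
  have ht' : (0:ℝ) < t := by exact_mod_cast ht
  set s := ∑ j, |x j| with hs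
  have hs0 : 0 ≤ s := Finset.sum_nonneg fun j _ => abs_nonneg _
  rcases hs0.eq_or_lt with h0 | h0
  · have : ∀ j, x j = 0 := by
      intro j
      have := (Finset.sum_eq_zero_iff_of_nonneg (fun j _ => abs_nonneg (x j))).1 h0.symm j (Finset.mem_univ j)
      simpa using this
    simp [this, ← h0]
  · have := kernel_bound hN htm A hA (fun j => (t / s) * x j)
      (by intro i
          have h1 : XX (A i) (fun j => (t / s) * x j) = (t / s) * XX (A i) x := by
            simp only [XX, Finset.mul_sum]
            exact Finset.sum_congr rfl fun j _ => by ring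
          rw [h1, hx i, mul_zero])
      (by simp only [abs_mul]
          rw [← Finset.mul_sum, ← hs, abs_of_pos (by positivity)]
          rw [div_mul_cancel₀ _ h0.ne'])
    simp only [mul_pow] at this
    rw [← Finset.mul_sum, div_pow, div_mul_eq_mul_div, div_le_iff₀ (by positivity)] at this
    rw [div_mul_eq_mul_div, le_div_iff₀ ht']
    have h2 : t * ((∑ j, x j ^ 2) * t) ≤ t * (11252 * s ^ 2) := by nlinarith
    exact le_of_mul_le_mul_left h2 ht'

lemma pt_interp (P Q r y h : ℝ) (hPr : P ≤ r) (hrQ : r ≤ Q) (hr : 0 < r) (hP : 0 < P) (hy : 0 ≤ y) (hh : 0 < h) :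
    y ^ r ≤ h ^ (r - P) * y ^ P + h ^ (r - Q) * y ^ Q := by
  rcases hy.eq_or_lt with h0 | h0
  · rw [← h0, Real.zero_rpow hr.ne', Real.zero_rpow hP.ne', Real.zero_rpow (by linarith)]; simp
  rcases le_total y h with hc | hc
  · have h1 : y ^ r = y ^ (r - P) * y ^ P := by rw [← Real.rpow_add h0]; congr 1; ring
    have h2 : y ^ (r - P) ≤ h ^ (r - P) := Real.rpow_le_rpow hy hc (by linarith)
    have h3 : y ^ (r - P) * y ^ P ≤ h ^ (r - P) * y ^ P := by gcongr
    have h4 : 0 ≤ h ^ (r - Q) * y ^ Q := by positivity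
    linarith
  · have h1 : y ^ r = y ^ (r - Q) * y ^ Q := by rw [← Real.rpow_add h0]; congr 1; ring
    have h2 : y ^ (r - Q) ≤ h ^ (r - Q) := Real.rpow_le_rpow_of_nonpos hh hc (by linarith)
    have h3 : y ^ (r - Q) * y ^ Q ≤ h ^ (r - Q) * y ^ Q := by gcongr
    have h4 : 0 ≤ h ^ (r - P) * y ^ P := by positivity
    linarith

lemma sum_interp {m : ℕ} (P r h : ℝ) (x : Fin m → ℝ) (hPr : P ≤ r) (hrQ : r ≤ 2) (hr : 0 < r) (hP : 0 < P)
    (hh : 0 < h) (hx : ∑ j, |x j| ^ P ≤ 1) :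
    ∑ j, |x j| ^ r ≤ h ^ (r - P) + h ^ (r - 2) * ∑ j, x j ^ 2 := by
  have h1 : ∑ j, |x j| ^ r ≤ ∑ j, (h ^ (r - P) * |x j| ^ P + h ^ (r - 2) * x j ^ 2) := by
    refine Finset.sum_le_sum fun j _ => ?_
    have := pt_interp P 2 r |x j| h hPr hrQ hr hP (abs_nonneg _) hh
    rw [Real.rpow_two, sq_abs] at this
    exact this
  rw [Finset.sum_add_distrib, ← Finset.mul_sum, ← Finset.mul_sum] at h1
  have h2 : h ^ (r - P) * ∑ j, |x j| ^ P ≤ h ^ (r - P) * 1 := by gcongr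
  linarith

lemma interp {m : ℕ} (P Q B : ℝ) (hP : 0 < P) (hP1 : P ≤ 1) (hPQ : P < Q) (hQ : Q ≤ 2) (hB : 0 < B)
    (x : Fin m → ℝ) (hx : ∑ j, |x j| ^ P ≤ 1) (h2 : ∑ j, x j ^ 2 ≤ B * (∑ j, |x j|) ^ 2) :
    (∑ j, |x j| ^ Q) ^ (1 / Q) ≤ 2 ^ (1 / Q) * (4 * B) ^ (1 / P - 1 / Q) := by
  have hQ0 : 0 < Q := by linarith
  set s := ∑ j, |x j| with hs
  have hs0 : 0 ≤ s := Finset.sum_nonneg fun j _ => abs_nonneg _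
  set H := (4 * B) ^ (1 / P) with hH
  have hH0 : 0 < H := by positivity
  have hHP : H ^ P = 4 * B := by
    rw [hH, ← Real.rpow_mul (by positivity), one_div_mul_cancel hP.ne', Real.rpow_one]
  have hle : 2 * B * s ≤ H := by
    rcases hs0.eq_or_lt with h0 | h0
    · rw [← h0]; simpa using hH0.le
    set h := 2 * B * s with hh
    have hh0 : 0 < h := by positivity
    have h3 := sum_interp P 1 h x hP1 (by norm_num) one_pos hP hh0 hx
    simp only [Real.rpow_one] at h3
    rw [← hs, show (1:ℝ) - 2 = -1 by norm_num, Real.rpow_neg_one] at h3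
    have h4 : h⁻¹ * ∑ j, x j ^ 2 ≤ s / 2 := by
      rw [inv_mul_le_iff₀ hh0, hh]; linarith
    have h5 : s ≤ 2 * h ^ (1 - P) := by linarith
    have h6 : h ≤ 4 * B * h ^ (1 - P) := by
      calc h = 2 * B * s := hh
        _ ≤ 2 * B * (2 * h ^ (1 - P)) := by gcongr
        _ = _ := by ring
    have h7 : h ^ P ≤ 4 * B := by
      have h8 : h = h ^ P * h ^ (1 - P) := by rw [← Real.rpow_add hh0]; simp
      have h9 : h ^ P * h ^ (1 - P) ≤ 4 * B * h ^ (1 - P) := by rw [← h8]; exact h6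
      exact le_of_mul_le_mul_right h9 (by positivity)
    rw [← hHP] at h7
    exact (Real.rpow_le_rpow_iff hh0.le hH0.le hP).1 h7
  have hS2 : ∑ j, x j ^ 2 ≤ H ^ (2 - P) := by
    rw [Real.rpow_sub hH0, hHP, Real.rpow_two, le_div_iff₀ (by positivity)]
    have := pow_le_pow_left₀ (by positivity) hle 2
    nlinarith
  have hSQ := sum_interp P Q H x hPQ.le hQ hQ0 hP hH0 hx
  have h10 : H ^ (Q - 2) * ∑ j, x j ^ 2 ≤ H ^ (Q - P) := by
    calc _ ≤ H ^ (Q - 2) * H ^ (2 - P) := by gcongr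
      _ = _ := by rw [← Real.rpow_add hH0]; congr 1; ring
  calc (∑ j, |x j| ^ Q) ^ (1 / Q) ≤ (2 * H ^ (Q - P)) ^ (1 / Q) :=
        Real.rpow_le_rpow (Finset.sum_nonneg fun j _ => by positivity) (by linarith) (by positivity)
    _ = _ := by
      rw [Real.mul_rpow (by norm_num) (by positivity), hH, ← Real.rpow_mul (by positivity),
        ← Real.rpow_mul (by positivity)]
      congr 2; field_simp

lemma numerics (m n : ℕ) (hn : 1 ≤ n) (hnm : n < m)
    (hD : 10000 * Real.log (Real.exp 1 * m / n) ≤ n) :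
    ∃ t N : ℕ, 0 < t ∧ 0 < N ∧ N + t = n - 1 ∧ t ≤ m ∧
      (1 / t : ℝ) ≤ 20000 * (Real.log (Real.exp 1 * m / n) / n) ∧
      2 * ((1 + m / t : ℝ) ^ t * Real.exp (2 * t)) * Real.exp (-(N / 50)) < 1 := by
  have hn0 : (0:ℝ) < n := by exact_mod_cast hn
  have hm0 : (0:ℝ) < m := by exact_mod_cast (by omega : 0 < m)
  have hmn : (n:ℝ) ≤ m := by exact_mod_cast hnm.le
  set L := Real.log (Real.exp 1 * m / n) with hL
  have hLeq : L = 1 + Real.log (m / n) := by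
    rw [hL, mul_div_assoc, Real.log_mul (Real.exp_pos 1).ne' (by positivity), Real.log_exp]
  have hlog0 : 0 ≤ Real.log (m / n : ℝ) := Real.log_nonneg (by rw [le_div_iff₀ hn0]; linarith)
  have hL1 : 1 ≤ L := by linarith
  have hmnL : (m / n : ℝ) = Real.exp (L - 1) := by
    rw [hLeq, add_sub_cancel_left, Real.exp_log (by positivity)]
  set Y : ℝ := n / (10000 * L) with hY
  have hY1 : 1 ≤ Y := by rw [hY, le_div_iff₀ (by positivity)]; linarith
  set t := ⌊Y⌋₊ with ht
  have ht1 : 1 ≤ t := Nat.one_le_floor_iff _ |>.2 hY1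
  have ht1' : (1:ℝ) ≤ t := by exact_mod_cast ht1
  have ht0 : (0:ℝ) < t := by linarith
  have htY : (t:ℝ) ≤ Y := Nat.floor_le (by linarith)
  have hYt : Y ≤ 2 * t := by have := Nat.lt_floor_add_one Y; rw [← ht] at this; linarith
  have htL : t * L ≤ n / 10000 := by
    rw [hY, le_div_iff₀ (by positivity)] at htY
    linarith
  have hnL : (n:ℝ) ≤ 20000 * L * t := by
    rw [hY, div_le_iff₀ (by positivity)] at hYt
    linarith
  have htn : (t:ℝ) ≤ n / 10000 := by nlinarith
  have hn4 : (10000:ℝ) ≤ n := by linarith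
  have htn' : t + 2 ≤ n := by
    have : ((t + 2 : ℕ) : ℝ) ≤ n := by push_cast; linarith
    exact_mod_cast this
  refine ⟨t, n - 1 - t, ht1, by omega, by omega, by omega, ?_, ?_⟩
  · rw [mul_div_assoc', div_le_div_iff₀ ht0 hn0]; linarith
  have hN : ((n - 1 - t : ℕ) : ℝ) = n - 1 - t := by
    rw [Nat.cast_sub (by omega), Nat.cast_sub hn]; simp
  rw [hN]
  have h1 : (1 + m / t : ℝ) ≤ Real.exp (11 + 2 * L) := by
    have ha : (m / t : ℝ) ≤ 20000 * L * (m / n) := by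
      rw [mul_div_assoc', div_le_div_iff₀ ht0 hn0]; nlinarith
    rw [hmnL] at ha
    have hb : L ≤ Real.exp (L - 1) := by linarith [Real.add_one_le_exp (L - 1)]
    have hc : (1:ℝ) ≤ Real.exp (L - 1) := by linarith
    have hd : (m / t : ℝ) ≤ 20000 * (Real.exp (L - 1) * Real.exp (L - 1)) := by
      refine ha.trans ?_
      rw [mul_assoc]; gcongr
    have he : (20001:ℝ) ≤ Real.exp 13 := by
      have := Real.exp_one_gt_d9
      have h13 : Real.exp 13 = Real.exp 1 ^ 13 := by rw [← Real.exp_nat_mul]; norm_num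
      rw [h13]
      calc (20001:ℝ) ≤ 2.7 ^ 13 := by norm_num
        _ ≤ _ := by gcongr; linarith
    have hf : Real.exp (11 + 2 * L) = Real.exp 13 * (Real.exp (L - 1) * Real.exp (L - 1)) := by
      rw [← Real.exp_add, ← Real.exp_add]; congr 1; ring
    rw [hf]
    have hg : 1 ≤ Real.exp (L - 1) * Real.exp (L - 1) := by nlinarith
    nlinarith
  have h2 : (1 + m / t : ℝ) ^ t ≤ Real.exp (t * (11 + 2 * L)) := by
    rw [Real.exp_nat_mul]
    exact pow_le_pow_left₀ (by positivity) h1 t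
  have h3 : (2:ℝ) ≤ Real.exp 1 := by linarith [Real.add_one_le_exp (1:ℝ)]
  calc 2 * ((1 + m / t : ℝ) ^ t * Real.exp (2 * t)) * Real.exp (-((n - 1 - t) / 50))
      ≤ Real.exp 1 * (Real.exp (t * (11 + 2 * L)) * Real.exp (2 * t)) * Real.exp (-((n - 1 - t) / 50)) := by
        gcongr
    _ = Real.exp (1 + (t * (11 + 2 * L) + 2 * t) + -((n - 1 - t) / 50)) := by
        rw [Real.exp_add, Real.exp_add, Real.exp_add]
    _ < 1 := by
        rw [Real.exp_lt_one_iff]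
        nlinarith

noncomputable def bigMap {m N : ℕ} (t : ℕ) (A : Fin N → (Fin m → Bool)) :
    (Fin m → ℝ) →ₗ[ℝ] (Fin N ⊕ Fin t → ℝ) where
  toFun x := Sum.elim (fun i => XX (A i) x)
    (fun k => if h : (k : ℕ) < m then x ⟨k, h⟩ else 0)
  map_add' x y := by
    funext i
    rcases i with i | k
    · simp [XX, mul_add, Finset.sum_add_distrib]
    · simp only [Sum.elim_inr, Pi.add_apply]; split_ifs <;> simp
  map_smul' c x := by
    funext i
    rcases i with i | k
    · simp only [XX, Sum.elim_inl, Pi.smul_apply, smul_eq_mul, RingHom.id_apply, Finset.mul_sum]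
      exact Finset.sum_congr rfl fun j _ => by ring
    · simp only [Sum.elim_inr, Pi.smul_apply]; split_ifs <;> simp

lemma lpnorm_eq {p : ℝ≥0∞} (hp : p ≠ ∞) {m : ℕ} (x : Fin m → ℝ) :
    lpnorm p x = (∑ j, |x j| ^ p.toReal) ^ (1 / p.toReal) := by
  rw [lpnorm, if_neg hp]

lemma lpnorm_nonneg (p : ℝ≥0∞) {m : ℕ} (x : Fin m → ℝ) : 0 ≤ lpnorm p x := by
  unfold lpnorm; split_ifs
  · exact Real.iSup_nonneg fun j => abs_nonneg _
  · exact Real.rpow_nonneg (Finset.sum_nonneg fun j _ => Real.rpow_nonneg (abs_nonneg _) _) _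

/-- For `0 < p ≤ 1`, `p < q ≤ 2`, `λ > 0` and `σ_j = j^{-λ}` (0-indexed),
for all `1 ≤ n < m` with `n ≥ D log(e m/n)`:
`c_n(D_σ : ℓ_p^m → ℓ_q^m) ≤ K (log(e m/n)/n)^{λ + 1/p - 1/q}`. -/
theorem statement15 (p q : ℝ≥0∞) (hp0 : 0 < p) (hp1 : p ≤ 1) (hpq : p < q) (hq2 : q ≤ 2)
    (lam : ℝ) (hlam : 0 < lam) :
    ∃ D K : ℝ, 0 < D ∧ 0 < K ∧
      ∀ (m n : ℕ), 1 ≤ n → n < m →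
        D * Real.log (Real.exp 1 * m / n) ≤ n →
        gelfandFin p q (fun j : Fin m => ((j : ℕ) + 1 : ℝ) ^ (-lam)) n ≤
          K * (Real.log (Real.exp 1 * m / n) / n) ^ (lam + 1 / p.toReal - 1 / q.toReal) := by
  have hpt : p ≠ ∞ := (hp1.trans_lt ENNReal.one_lt_top).ne
  have hqt : q ≠ ∞ := (hq2.trans_lt ENNReal.ofNat_lt_top).ne
  have hP : 0 < p.toReal := ENNReal.toReal_pos hp0.ne' hpt
  have hP1 : p.toReal ≤ 1 := by simpa using ENNReal.toReal_mono ENNReal.one_ne_top hp1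
  have hPQ : p.toReal < q.toReal := (ENNReal.toReal_lt_toReal hpt hqt).2 hpq
  have hQ2 : q.toReal ≤ 2 := by simpa using ENNReal.toReal_mono ENNReal.ofNat_ne_top hq2
  set P := p.toReal with hPdef
  set Q := q.toReal with hQdef
  have hQ : 0 < Q := by linarith
  have hβ : 0 < 1 / P - 1 / Q := by
    have := one_div_lt_one_div_of_lt hP hPQ; linarith
  obtain ⟨G, hG⟩ : ∃ G : ℝ, G = 4 * 11252 * 20000 := ⟨_, rfl⟩
  have hG0 : 0 < G := by norm_num [hG]
  refine ⟨10000, 2 ^ (1 / Q) * G ^ (lam + 1 / P - 1 / Q), by norm_num, by positivity, ?_⟩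
  intro m n hn hnm hD
  obtain ⟨t, N, ht, hN, hNt, htm, htR, hexp⟩ := numerics m n hn hnm hD
  set R := Real.log (Real.exp 1 * m / n) / n with hR
  have ht' : (0:ℝ) < t := by exact_mod_cast ht
  have hR0 : 0 < R := by
    have : (0:ℝ) < 1 / t := by positivity
    linarith
  obtain ⟨A, hA⟩ := exists_matrix' m N t (by omega) ht hexp
  have hrhs : 0 ≤ 2 ^ (1 / Q) * G ^ (lam + 1 / P - 1 / Q) * R ^ (lam + 1 / P - 1 / Q) := by positivity
  have hbdd : BddBelow { s | ∃ E : Submodule ℝ (Fin m → ℝ),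
      Module.finrank ℝ ((Fin m → ℝ) ⧸ E) ≤ n - 1 ∧
      s = sSup ((fun x => lpnorm q (fun j => (fun j : Fin m => ((j : ℕ) + 1 : ℝ) ^ (-lam)) j * x j)) ''
        {x : Fin m → ℝ | lpnorm p x ≤ 1 ∧ x ∈ E}) } := by
    refine ⟨0, ?_⟩
    rintro s ⟨E, _, rfl⟩
    refine Real.sSup_nonneg ?_
    rintro _ ⟨x, _, rfl⟩
    exact lpnorm_nonneg _ _
  unfold gelfandFin
  refine (csInf_le hbdd ⟨LinearMap.ker (bigMap t A), ?_, rfl⟩).trans ?_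
  · rw [(bigMap t A).quotKerEquivRange.finrank_eq]
    refine (Submodule.finrank_le _).trans ?_
    simp; omega
  refine Real.sSup_le ?_ hrhs
  rintro _ ⟨x, ⟨hx1, hxE⟩, rfl⟩
  rw [LinearMap.mem_ker] at hxE
  have hxA : ∀ i, XX (A i) x = 0 := fun i => congrFun hxE (Sum.inl i)
  have hx0 : ∀ j : Fin m, (j : ℕ) < t → x j = 0 := by
    intro j hj
    have := congrFun hxE (Sum.inr ⟨j, hj⟩)
    simpa [bigMap] using this
  have hxP : ∑ j, |x j| ^ P ≤ 1 := by
    rw [lpnorm_eq hpt] at hx1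
    have h0 : 0 ≤ ∑ j, |x j| ^ P := Finset.sum_nonneg fun j _ => Real.rpow_nonneg (abs_nonneg _) _
    by_contra hcon
    exact absurd hx1 (not_le.2 (Real.one_lt_rpow (not_le.1 hcon) (by positivity)))
  have hker := kernel_bound' hN ht htm A hA x hxA
  have hint := interp P Q (11252 / t) hP hP1 hPQ hQ2 (by positivity) x hxP hker
  beta_reduce
  rw [lpnorm_eq hqt]
  have hτ0 : (0:ℝ) ≤ (1 / t : ℝ) ^ lam := by positivity
  have hσ : ∑ j : Fin m, |((j : ℕ) + 1 : ℝ) ^ (-lam) * x j| ^ Q ≤ ((1 / t : ℝ) ^ lam) ^ Q * ∑ j, |x j| ^ Q := by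
    rw [Finset.mul_sum]
    refine Finset.sum_le_sum fun j _ => ?_
    rw [← Real.mul_rpow hτ0 (abs_nonneg _)]
    refine Real.rpow_le_rpow (abs_nonneg _) ?_ hQ.le
    by_cases hj : (j : ℕ) < t
    · rw [hx0 j hj]; simp
    · rw [abs_mul]
      gcongr
      have hj' : (t:ℝ) ≤ (j : ℕ) + 1 := by
        have : (t:ℝ) ≤ (j : ℕ) := by exact_mod_cast not_lt.1 hj
        linarith
      rw [abs_of_nonneg (by positivity), one_div, Real.inv_rpow ht'.le, ← Real.rpow_neg ht'.le]
      exact Real.rpow_le_rpow_of_nonpos ht' hj' (by linarith)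
  have hS0 : 0 ≤ ∑ j, |x j| ^ Q := Finset.sum_nonneg fun j _ => Real.rpow_nonneg (abs_nonneg _) _
  have h1t : (0:ℝ) < 1 / t := by positivity
  calc (∑ j : Fin m, |((j : ℕ) + 1 : ℝ) ^ (-lam) * x j| ^ Q) ^ (1 / Q)
      ≤ (((1 / t : ℝ) ^ lam) ^ Q * ∑ j, |x j| ^ Q) ^ (1 / Q) :=
        Real.rpow_le_rpow (Finset.sum_nonneg fun j _ => Real.rpow_nonneg (abs_nonneg _) _) hσ (by positivity)
    _ = (1 / t : ℝ) ^ lam * (∑ j, |x j| ^ Q) ^ (1 / Q) := by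
        rw [Real.mul_rpow (by positivity) hS0, ← Real.rpow_mul hτ0, mul_one_div_cancel hQ.ne', Real.rpow_one]
    _ ≤ (G * R) ^ lam * (2 ^ (1 / Q) * (G * R) ^ (1 / P - 1 / Q)) := by
        refine mul_le_mul ?_ (hint.trans ?_) (Real.rpow_nonneg hS0 _) (by positivity)
        · refine Real.rpow_le_rpow h1t.le ?_ hlam.le
          rw [hG]; nlinarith
        · refine mul_le_mul_of_nonneg_left (Real.rpow_le_rpow (by positivity) ?_ hβ.le) (by positivity)
          rw [hG, div_eq_mul_one_div]; nlinarith
    _ = 2 ^ (1 / Q) * G ^ (lam + 1 / P - 1 / Q) * R ^ (lam + 1 / P - 1 / Q) := by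
        rw [mul_assoc, ← Real.mul_rpow hG0.le hR0.le, add_sub_assoc,
          Real.rpow_add (by positivity : 0 < G * R)]
        ring
end

section
/- Let 0 < q ≤ p ≤ ∞ and let σ₁ ≥ σ₂ ≥ … ≥ σ_m ≥ 0. Then for every 1 ≤ n ≤ m, the n-th Gelfand number of the diagonal operator D_σ : ℓ_p^m → ℓ_q^m satisfies c_n(D_σ : ℓ_p^m → ℓ_q^m) = (Σ_{j=n}^m σ_j^r)^{1/r}, where 1/r = 1/q − 1/p if q < p, and (interpreting the right-hand side as σ_n) r = ∞ if q = p. -/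
open scoped ENNReal NNReal

namespace G17

lemma lpnorm_smul (p : ℝ≥0∞) (hp : p ≠ 0) {m : ℕ} (a : ℝ) (ha : 0 ≤ a) (x : Fin m → ℝ) :
    lpnorm p (fun j => a * x j) = a * lpnorm p x := by
  unfold lpnorm
  split_ifs with h
  · simp only [abs_mul, abs_of_nonneg ha]
    rw [Real.mul_iSup_of_nonneg ha]
  · have hp0 : 0 < p.toReal := ENNReal.toReal_pos hp h
    simp only [abs_mul, abs_of_nonneg ha]
    simp_rw [Real.mul_rpow ha (abs_nonneg _)]
    rw [← Finset.mul_sum, Real.mul_rpow (by positivity)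
      (Finset.sum_nonneg fun _ _ => by positivity), ← Real.rpow_mul ha]
    rw [mul_one_div_cancel hp0.ne', Real.rpow_one]

lemma lpnorm_mono (p : ℝ≥0∞) {m : ℕ} (x y : Fin m → ℝ) (h : ∀ j, |x j| ≤ |y j|) :
    lpnorm p x ≤ lpnorm p y := by
  unfold lpnorm
  split_ifs with hp
  · exact Real.iSup_le (fun j => (h j).trans (le_ciSup (f := fun j => |y j|)
      (Set.finite_range _).bddAbove j)) (Real.iSup_nonneg fun _ => abs_nonneg _)
  · apply Real.rpow_le_rpow (Finset.sum_nonneg fun _ _ => by positivity)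
    · exact Finset.sum_le_sum fun j _ =>
        Real.rpow_le_rpow (abs_nonneg _) (h j) ENNReal.toReal_nonneg
    · positivity

lemma abs_le_lpnorm (p : ℝ≥0∞) (hp : p ≠ 0) {m : ℕ} (x : Fin m → ℝ) (j : Fin m) :
    |x j| ≤ lpnorm p x := by
  unfold lpnorm
  split_ifs with h
  · exact le_ciSup (f := fun j => |x j|) (Set.finite_range _).bddAbove j
  · have hp0 : 0 < p.toReal := ENNReal.toReal_pos hp h
    have h1 : |x j| ^ p.toReal ≤ ∑ j, |x j| ^ p.toReal :=
      Finset.single_le_sum (f := fun j => |x j| ^ p.toReal)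
        (fun _ _ => by positivity) (Finset.mem_univ j)
    have h2 := Real.rpow_le_rpow (by positivity) h1 (z := 1 / p.toReal) (by positivity)
    rwa [← Real.rpow_mul (abs_nonneg _), mul_one_div_cancel hp0.ne', Real.rpow_one] at h2

lemma lpnorm_zero (p : ℝ≥0∞) (hp : p ≠ 0) {m : ℕ} :
    lpnorm p (fun _ : Fin m => (0:ℝ)) = 0 := by
  have := lpnorm_smul p hp (m := m) 0 le_rfl (fun _ => 0)
  simpa using this

lemma exists_vec {m n : ℕ} (hn1 : 1 ≤ n) (E : Submodule ℝ (Fin m → ℝ))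
    (hE : Module.finrank ℝ ((Fin m → ℝ) ⧸ E) ≤ n - 1) (J : Finset (Fin m))
    (hJ : J.card + n ≤ m) : ∃ y ∈ E, y ≠ 0 ∧ ∀ j ∈ J, y j = 0 := by
  have h1 := E.finrank_quotient_add_finrank
  rw [Module.finrank_fin_fun] at h1
  let f : E →ₗ[ℝ] (J → ℝ) := (LinearMap.funLeft ℝ ℝ (fun j : J => (j : Fin m))).comp E.subtype
  have h2 : LinearMap.ker f ≠ ⊥ := by
    apply LinearMap.ker_ne_bot_of_finrank_lt
    rw [Module.finrank_fintype_fun_eq_card, Fintype.card_coe]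
    omega
  obtain ⟨y, hy, hy0⟩ := (Submodule.ne_bot_iff _).1 h2
  refine ⟨y, y.2, fun h => hy0 (Subtype.ext h), fun j hj => ?_⟩
  exact congrFun (LinearMap.mem_ker.1 hy) ⟨j, hj⟩

lemma codim_std {m n : ℕ} (hn1 : 1 ≤ n) (hnm : n ≤ m) :
    ∃ E : Submodule ℝ (Fin m → ℝ), Module.finrank ℝ ((Fin m → ℝ) ⧸ E) ≤ n - 1 ∧
      ∀ x ∈ E, ∀ j : Fin m, (j : ℕ) + 1 < n → x j = 0 := by
  let f : (Fin m → ℝ) →ₗ[ℝ] (Fin (n-1) → ℝ) :=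
    LinearMap.funLeft ℝ ℝ (fun j : Fin (n-1) => (⟨j, by omega⟩ : Fin m))
  refine ⟨LinearMap.ker f, ?_, ?_⟩
  · rw [LinearEquiv.finrank_eq f.quotKerEquivRange]
    exact (Submodule.finrank_le _).trans (by simp)
  · intro x hx j hj
    exact congrFun (LinearMap.mem_ker.1 hx) ⟨j, by omega⟩

lemma exists_sat {m n : ℕ} (hn1 : 1 ≤ n) (E : Submodule ℝ (Fin m → ℝ))
    (hE : Module.finrank ℝ ((Fin m → ℝ) ⧸ E) ≤ n - 1) (b : Fin m → ℝ) (hb : ∀ j, 0 ≤ b j) :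
    ∃ x ∈ E, (∀ j, |x j| ≤ b j) ∧
      m < (Finset.univ.filter (fun j => |x j| = b j)).card + n := by
  classical
  by_contra! hcon
  have key : ∀ k : ℕ, ∃ x ∈ E, (∀ j, |x j| ≤ b j) ∧
      k ≤ (Finset.univ.filter (fun j => |x j| = b j)).card := by
    intro k
    induction k with
    | zero => exact ⟨0, E.zero_mem, by simpa using hb, by simp⟩
    | succ k ih =>
      obtain ⟨x, hxE, hxb, hk⟩ := ih
      obtain ⟨y, hyE, hy0, hyJ⟩ := exists_vec hn1 E hE _ (hcon x hxE hxb)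
      simp only [Finset.mem_filter, Finset.mem_univ, true_and] at hyJ
      obtain ⟨i, hi⟩ : ∃ i, y i ≠ 0 := by
        by_contra! h
        exact hy0 (funext h)
      let τ : Fin m → ℝ := fun j => (b j - SignType.sign (y j) * x j) / |y j|
      obtain ⟨l, hl, hmin⟩ := (Finset.univ.filter (fun j => y j ≠ 0)).exists_min_image τ
        ⟨i, by simpa using hi⟩
      simp only [Finset.mem_filter, Finset.mem_univ, true_and] at hl hmin
      have hs : ∀ j, y j ≠ 0 → (SignType.sign (y j) : ℝ) = 1 ∧ 0 < y j ∨
          (SignType.sign (y j) : ℝ) = -1 ∧ y j < 0 := by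
        intro j hj
        rcases lt_or_gt_of_ne hj with h | h
        · right; simp [h]
        · left; simp [h]
      have hτ0 : 0 ≤ τ l := by
        apply div_nonneg _ (abs_nonneg _)
        have := abs_le.1 (hxb l)
        rcases hs l hl with ⟨h, _⟩ | ⟨h, _⟩ <;> rw [h] <;> linarith
      have hup : ∀ j, y j ≠ 0 → τ l * |y j| ≤ b j - SignType.sign (y j) * x j := by
        intro j hj
        have := hmin j hj
        exact (le_div_iff₀ (abs_pos.2 hj)).1 this
      have heq : τ l * |y l| = b l - SignType.sign (y l) * x l :=
        div_mul_cancel₀ _ (abs_pos.2 hl).ne'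
      have hnew : ∀ j, |x j + τ l * y j| ≤ b j := by
        intro j
        by_cases hj : y j = 0
        · simpa [hj] using hxb j
        have h1 := hup j hj
        have h2 := abs_le.1 (hxb j)
        have h3 : 0 ≤ τ l * |y j| := by positivity
        rw [abs_le]
        rcases hs j hj with ⟨h, h'⟩ | ⟨h, h'⟩
        · rw [h] at h1
          rw [abs_of_pos h'] at h1 h3
          constructor <;> linarith
        · rw [h] at h1
          rw [abs_of_neg h'] at h1 h3
          constructor <;> linarith
      have hsat : |x l + τ l * y l| = b l := by
        rcases hs l hl with ⟨h, h'⟩ | ⟨h, h'⟩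
        · rw [h, abs_of_pos h'] at heq
          rw [show x l + τ l * y l = b l by linarith, abs_of_nonneg (hb l)]
        · rw [h, abs_of_neg h'] at heq
          rw [show x l + τ l * y l = - b l by linarith, abs_neg, abs_of_nonneg (hb l)]
      refine ⟨x + τ l • y, E.add_mem hxE (E.smul_mem _ hyE), fun j => by simpa using hnew j, ?_⟩
      refine lt_of_le_of_lt hk (Finset.card_lt_card ?_)
      rw [Finset.ssubset_iff_of_subset]
      · refine ⟨l, by simpa using hsat, ?_⟩
        simp only [Finset.mem_filter, Finset.mem_univ, true_and]
        exact fun h => hl (hyJ l h)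
      · intro j hj
        simp only [Finset.mem_filter, Finset.mem_univ, true_and] at hj ⊢
        simp [hyJ j hj, hj]
  obtain ⟨x, _, _, h⟩ := key (m + 1)
  have := (Finset.univ.filter (fun j => |x j| = b j)).card_le_univ
  rw [Fintype.card_fin] at this
  omega

lemma sum_compare {m n : ℕ} (hn1 : 1 ≤ n) (hnm : n ≤ m) (f : Fin m → ℝ)
    (hmono : ∀ i j : Fin m, i ≤ j → f j ≤ f i) (hf : ∀ j, 0 ≤ f j) (J : Finset (Fin m))
    (hJ : m < J.card + n) :
    (∑ j : Fin m, if n ≤ (j : ℕ) + 1 then f j else 0) ≤ ∑ j ∈ J, f j := by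
  classical
  rw [← Finset.sum_filter]
  set K := Finset.univ.filter (fun j : Fin m => n ≤ (j : ℕ) + 1) with hK
  let k : Fin m := ⟨n - 1, by omega⟩
  have hKc : K.card + (n - 1) = m := by
    have : K = Finset.Ici k := by
      ext j; simp [hK, k, Fin.le_def]
    rw [this, Fin.card_Ici]
    simp only [k]; omega
  have h1 : ∑ j ∈ K, f j = ∑ j ∈ K \ J, f j + ∑ j ∈ K ∩ J, f j := by
    rw [add_comm]; exact (Finset.sum_inter_add_sum_sdiff K J f).symm
  have h2 : ∑ j ∈ J, f j = ∑ j ∈ J \ K, f j + ∑ j ∈ K ∩ J, f j := by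
    rw [Finset.inter_comm, add_comm]; exact (Finset.sum_inter_add_sum_sdiff J K f).symm
  have h3 : ∑ j ∈ K \ J, f j ≤ (K \ J).card • f k := by
    apply Finset.sum_le_card_nsmul
    intro j hj
    simp only [hK, Finset.mem_sdiff, Finset.mem_filter, Finset.mem_univ, true_and] at hj
    apply hmono
    simp only [Fin.le_def, k]; omega
  have h4 : (J \ K).card • f k ≤ ∑ j ∈ J \ K, f j := by
    apply Finset.card_nsmul_le_sum
    intro j hj
    simp only [hK, Finset.mem_sdiff, Finset.mem_filter, Finset.mem_univ, true_and] at hj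
    apply hmono
    simp only [Fin.le_def, k]; omega
  have h5 : (K \ J).card ≤ (J \ K).card := by
    rw [Finset.card_sdiff_le_card_sdiff_iff]
    omega
  have h6 : (K \ J).card • f k ≤ (J \ K).card • f k := nsmul_le_nsmul_left (hf k) h5
  linarith

lemma reduce (p q : ℝ≥0∞) (hq0 : 0 < q) (hqp : q ≤ p) {m : ℕ}
    (σ : Fin m → ℝ)
    (n : ℕ) (hn1 : 1 ≤ n) (hnm : n ≤ m) (c : ℝ)
    (hL : ∀ E : Submodule ℝ (Fin m → ℝ), Module.finrank ℝ ((Fin m → ℝ) ⧸ E) ≤ n - 1 →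
      ∃ x ∈ E, lpnorm p x ≤ 1 ∧ c ≤ lpnorm q (fun j => σ j * x j))
    (hU : ∀ x : Fin m → ℝ, (∀ j : Fin m, (j : ℕ) + 1 < n → x j = 0) → lpnorm p x ≤ 1 →
      lpnorm q (fun j => σ j * x j) ≤ c) : gelfandFin p q σ n = c := by
  have hp0 : p ≠ 0 := (lt_of_lt_of_le hq0 hqp).ne'
  have hlow : ∀ E : Submodule ℝ (Fin m → ℝ), Module.finrank ℝ ((Fin m → ℝ) ⧸ E) ≤ n - 1 →
      c ≤ sSup ((fun x => lpnorm q (fun j => σ j * x j)) ''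
        {x : Fin m → ℝ | lpnorm p x ≤ 1 ∧ x ∈ E}) := by
    intro E hE
    obtain ⟨x, hxE, hx1, hxc⟩ := hL E hE
    refine le_csSup_of_le ⟨lpnorm q σ, ?_⟩ ⟨x, ⟨hx1, hxE⟩, rfl⟩ hxc
    rintro _ ⟨y, ⟨hy1, _⟩, rfl⟩
    apply lpnorm_mono
    intro j
    rw [abs_mul]
    exact mul_le_of_le_one_right (abs_nonneg _) ((abs_le_lpnorm p hp0 y j).trans hy1)
  obtain ⟨E, hE, hEx⟩ := codim_std hn1 hnm
  unfold gelfandFin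
  apply le_antisymm
  · refine csInf_le_of_le ⟨c, ?_⟩ ⟨E, hE, rfl⟩ ?_
    · rintro _ ⟨F, hF, rfl⟩
      exact hlow F hF
    · apply csSup_le
      · exact ⟨_, 0, ⟨(lpnorm_zero p hp0).le.trans zero_le_one, E.zero_mem⟩, rfl⟩
      · rintro _ ⟨y, ⟨hy1, hyE⟩, rfl⟩
        exact hU y (hEx y hyE) hy1
  · refine le_csInf ⟨_, E, hE, rfl⟩ ?_
    rintro _ ⟨F, hF, rfl⟩
    exact hlow F hF

lemma lower_eq (p : ℝ≥0∞) (hp0 : p ≠ 0) {m : ℕ}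
    (σ : Fin m → ℝ) (hσ0 : ∀ j, 0 ≤ σ j) (hmono : ∀ i j : Fin m, i ≤ j → σ j ≤ σ i)
    (n : ℕ) (hn1 : 1 ≤ n) (hnm : n ≤ m) (k : Fin m) (hk : (k : ℕ) = n - 1) (E : Submodule ℝ (Fin m → ℝ))
    (hE : Module.finrank ℝ ((Fin m → ℝ) ⧸ E) ≤ n - 1) :
      ∃ x ∈ E, lpnorm p x ≤ 1 ∧ σ k ≤ lpnorm p (fun j => σ j * x j) := by
  obtain ⟨y, hyE, hy0, hyJ⟩ := exists_vec hn1 E hE (Finset.Ioi k) (by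
    rw [Fin.card_Ioi]; omega)
  obtain ⟨i, hi⟩ : ∃ i, y i ≠ 0 := by
    by_contra! h
    exact hy0 (funext h)
  have hN : 0 < lpnorm p y := (abs_pos.2 hi).trans_le (abs_le_lpnorm p hp0 y i)
  have h1 : lpnorm p (fun j => (lpnorm p y)⁻¹ * y j) = 1 := by
    rw [lpnorm_smul p hp0 _ (by positivity)]
    exact inv_mul_cancel₀ hN.ne'
  refine ⟨(lpnorm p y)⁻¹ • y, E.smul_mem _ hyE, h1.le, ?_⟩
  have h2 := lpnorm_smul p hp0 (σ k) (hσ0 k) (fun j => (lpnorm p y)⁻¹ * y j)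
  rw [h1, mul_one] at h2
  rw [← h2]
  apply lpnorm_mono
  intro j
  simp only [Pi.smul_apply, smul_eq_mul]
  rw [abs_mul, abs_mul (σ j)]
  by_cases hj : k < j
  · simp [hyJ j (by simpa using hj)]
  · apply mul_le_mul_of_nonneg_right _ (abs_nonneg _)
    rw [abs_of_nonneg (hσ0 _), abs_of_nonneg (hσ0 _)]
    exact hmono _ _ (not_lt.1 hj)

lemma upper_eq (p : ℝ≥0∞) (hp0 : p ≠ 0) {m : ℕ}
    (σ : Fin m → ℝ) (hσ0 : ∀ j, 0 ≤ σ j) (hmono : ∀ i j : Fin m, i ≤ j → σ j ≤ σ i)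
    (n : ℕ) (hn1 : 1 ≤ n) (hnm : n ≤ m) (k : Fin m) (hk : (k : ℕ) = n - 1) (x : Fin m → ℝ)
    (hx : ∀ j : Fin m, (j : ℕ) + 1 < n → x j = 0) (hx1 : lpnorm p x ≤ 1) :
      lpnorm p (fun j => σ j * x j) ≤ σ k := by
  have h2 := lpnorm_smul p hp0 (σ k) (hσ0 k) x
  have h3 : lpnorm p (fun j => σ j * x j) ≤ lpnorm p (fun j => σ k * x j) := by
    apply lpnorm_mono
    intro j
    rw [abs_mul, abs_mul]
    by_cases hj : (j : ℕ) + 1 < n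
    · simp [hx j hj]
    · apply mul_le_mul_of_nonneg_right _ (abs_nonneg _)
      rw [abs_of_nonneg (hσ0 _), abs_of_nonneg (hσ0 _)]
      apply hmono
      rw [Fin.le_def]; omega
  rw [h2] at h3
  exact h3.trans (mul_le_of_le_one_right (hσ0 k) hx1)

lemma upper_lt (p q : ℝ≥0∞) (hq0 : 0 < q) (hqp : q < p) {m : ℕ}
    (σ : Fin m → ℝ) (hσ0 : ∀ j, 0 ≤ σ j)
    (n : ℕ) (x : Fin m → ℝ)
    (hx : ∀ j : Fin m, (j : ℕ) + 1 < n → x j = 0) (hx1 : lpnorm p x ≤ 1) :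
      lpnorm q (fun j => σ j * x j) ≤ (∑ j : Fin m,
          if n ≤ (j : ℕ) + 1 then σ j ^ (1 / q.toReal - 1 / p.toReal)⁻¹ else 0) ^
        (1 / q.toReal - 1 / p.toReal) := by
  have hqt : q ≠ ∞ := hqp.ne_top
  have hp0 : p ≠ 0 := (lt_of_lt_of_le hq0 hqp.le).ne'
  have hqr : 0 < q.toReal := ENNReal.toReal_pos hq0.ne' hqt
  have hpt : p ≠ ∞ → q.toReal < p.toReal := fun h => (ENNReal.toReal_lt_toReal hqt h).2 hqp
  unfold lpnorm at hx1 ⊢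
  rw [if_neg hqt]
  set u := q.toReal
  rw [← Finset.sum_filter]
  set K := Finset.univ.filter (fun j : Fin m => n ≤ (j : ℕ) + 1) with hK
  have hsum : ∑ j, |σ j * x j| ^ u = ∑ j ∈ K, (σ j * |x j|) ^ u := by
    rw [hK, Finset.sum_filter]
    apply Finset.sum_congr rfl
    intro j _
    split_ifs with h
    · rw [abs_mul, abs_of_nonneg (hσ0 j)]
    · rw [hx j (by omega), mul_zero, abs_zero, Real.zero_rpow hqr.ne']
  rw [hsum]
  by_cases h : p = ∞
  · subst h
    simp only [if_true] at hx1
    simp only [ENNReal.toReal_top, div_zero, sub_zero, one_div, inv_inv]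
    apply Real.rpow_le_rpow
    · exact Finset.sum_nonneg fun j _ => Real.rpow_nonneg (mul_nonneg (hσ0 j) (abs_nonneg _)) _
    · apply Finset.sum_le_sum
      intro j _
      apply Real.rpow_le_rpow (mul_nonneg (hσ0 j) (abs_nonneg _)) _ hqr.le
      apply mul_le_of_le_one_right (hσ0 j)
      exact (le_ciSup (f := fun j => |x j|) (Set.finite_range _).bddAbove j).trans hx1
    · positivity
  · rw [if_neg h] at hx1
    have huv := hpt h
    set v := p.toReal
    have hv : 0 < v := hqr.trans huv
    have hs : 0 < 1 / u - 1 / v := sub_pos.2 (one_div_lt_one_div_of_lt hqr huv)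
    set s := 1 / u - 1 / v with hsdef
    have ht : (s⁻¹).HolderTriple v u := ⟨by rw [inv_inv, hsdef]; ring, by positivity, hv⟩
    have hH := Real.Lr_rpow_le_Lp_mul_Lq_of_nonneg K (f := σ) (g := fun j => |x j|) ht
      (fun j _ => hσ0 j) (fun j _ => abs_nonneg _)
    have hA : 0 ≤ ∑ j ∈ K, σ j ^ s⁻¹ := Finset.sum_nonneg fun j _ => Real.rpow_nonneg (hσ0 j) _
    have hB : (∑ j ∈ K, |x j| ^ v) ^ (u / v) ≤ 1 := by
      have h0 : 0 ≤ ∑ j ∈ K, |x j| ^ v := Finset.sum_nonneg fun j _ => by positivity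
      have h1 : ∑ j ∈ K, |x j| ^ v ≤ ∑ j, |x j| ^ v :=
        Finset.sum_le_sum_of_subset_of_nonneg (Finset.subset_univ _) fun j _ _ => by positivity
      have h2 : (∑ j ∈ K, |x j| ^ v) ^ (1 / v) ≤ 1 :=
        (Real.rpow_le_rpow h0 h1 (by positivity)).trans hx1
      have h3 := Real.rpow_le_rpow (by positivity) h2 hqr.le
      rw [← Real.rpow_mul h0, Real.one_rpow] at h3
      rwa [show u / v = 1 / v * u by ring]
    have hC := hH.trans (mul_le_of_le_one_right (by positivity) hB)
    have hD := Real.rpow_le_rpow (Finset.sum_nonneg fun j _ =>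
      Real.rpow_nonneg (mul_nonneg (hσ0 j) (abs_nonneg _)) _) hC (z := 1 / u) (by positivity)
    rw [← Real.rpow_mul hA] at hD
    refine hD.trans_eq ?_
    congr 1
    field_simp

lemma lower_lt (p q : ℝ≥0∞) (hq0 : 0 < q) (hqp : q < p) {m : ℕ}
    (σ : Fin m → ℝ) (hσ0 : ∀ j, 0 ≤ σ j) (hmono : ∀ i j : Fin m, i ≤ j → σ j ≤ σ i)
    (n : ℕ) (hn1 : 1 ≤ n) (hnm : n ≤ m) (E : Submodule ℝ (Fin m → ℝ))
    (hE : Module.finrank ℝ ((Fin m → ℝ) ⧸ E) ≤ n - 1) :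
      ∃ x ∈ E, lpnorm p x ≤ 1 ∧ (∑ j : Fin m,
          if n ≤ (j : ℕ) + 1 then σ j ^ (1 / q.toReal - 1 / p.toReal)⁻¹ else 0) ^
        (1 / q.toReal - 1 / p.toReal) ≤ lpnorm q (fun j => σ j * x j) := by
  have hqt : q ≠ ∞ := hqp.ne_top
  have hp0 : p ≠ 0 := (lt_of_lt_of_le hq0 hqp.le).ne'
  have hu : 0 < q.toReal := ENNReal.toReal_pos hq0.ne' hqt
  have hpt : p ≠ ∞ → q.toReal < p.toReal := fun h => (ENNReal.toReal_lt_toReal hqt h).2 hqp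
  have hs : 0 < 1 / q.toReal - 1 / p.toReal := by
    by_cases h : p = ∞
    · subst h; simpa using hu
    · exact sub_pos.2 (one_div_lt_one_div_of_lt hu (hpt h))
  set s := 1 / q.toReal - 1 / p.toReal with hsdef
  set u := q.toReal with hudef
  set w := 1 / p.toReal with hw
  have hw0 : 0 ≤ w := by positivity
  let b : Fin m → ℝ := fun j => σ j ^ (s⁻¹ * w)
  have hb : ∀ j, 0 ≤ b j := fun j => Real.rpow_nonneg (hσ0 j) _
  obtain ⟨x, hxE, hxb, hcard⟩ := exists_sat hn1 E hE b hb
  have hσb : ∀ j, (σ j * b j) ^ u = σ j ^ s⁻¹ := by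
    intro j
    have : σ j * b j = σ j ^ (1 + s⁻¹ * w) := by
      rw [Real.rpow_add' (hσ0 j) (by positivity), Real.rpow_one]
    rw [this, ← Real.rpow_mul (hσ0 j)]
    congr 1
    have h1 : (s + w) * u = 1 := by
      rw [hsdef]; field_simp; ring
    field_simp
    linarith
  have hcmp := sum_compare hn1 hnm (fun j => σ j ^ s⁻¹)
    (fun i j hij => Real.rpow_le_rpow (hσ0 j) (hmono i j hij) (by positivity))
    (fun j => Real.rpow_nonneg (hσ0 j) _) _ hcard
  set S0 := ∑ j : Fin m, if n ≤ (j : ℕ) + 1 then σ j ^ s⁻¹ else 0 with hS0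
  have hS0n : 0 ≤ S0 := Finset.sum_nonneg fun j _ => by
    split_ifs
    · exact Real.rpow_nonneg (hσ0 j) _
    · exact le_rfl
  rcases hS0n.eq_or_lt with h0 | hpos
  · refine ⟨0, E.zero_mem, (lpnorm_zero p hp0).le.trans zero_le_one, ?_⟩
    rw [← h0, Real.zero_rpow hs.ne']
    simp only [Pi.zero_apply, mul_zero]
    rw [lpnorm_zero q hq0.ne']
  have hterm : ∀ j, |σ j * x j| ^ u = (σ j * |x j|) ^ u := fun j => by
    rw [abs_mul, abs_of_nonneg (hσ0 j)]
  set S := ∑ j, |σ j * x j| ^ u with hS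
  have hSS : S0 ≤ S := by
    refine hcmp.trans ?_
    refine le_trans (le_of_eq ?_) (Finset.sum_le_sum_of_subset_of_nonneg
      (Finset.subset_univ (Finset.univ.filter (fun j => |x j| = b j)))
      fun j _ _ => by positivity)
    apply Finset.sum_congr rfl
    intro j hj
    simp only [Finset.mem_filter, Finset.mem_univ, true_and] at hj
    rw [hterm, hj, hσb]
  have hSpos : 0 < S := hpos.trans_le hSS
  have hxS : lpnorm p x ≤ S ^ w := by
    unfold lpnorm
    split_ifs with h
    · have hw' : w = 0 := by rw [hw, h]; simp
      rw [hw', Real.rpow_zero]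
      apply Real.iSup_le _ zero_le_one
      intro j
      have := hxb j
      simpa [b, hw'] using this
    · have huv := hpt h
      have hv : 0 < p.toReal := hu.trans huv
      apply Real.rpow_le_rpow (Finset.sum_nonneg fun j _ => by positivity) _ hw0
      apply Finset.sum_le_sum
      intro j _
      rw [hterm, Real.mul_rpow (hσ0 j) (abs_nonneg _)]
      have h1 : |x j| ^ p.toReal = |x j| ^ (p.toReal - u) * |x j| ^ u := by
        rw [← Real.rpow_add' (abs_nonneg _) (by rw [sub_add_cancel]; exact hv.ne'), sub_add_cancel]
      rw [h1]
      apply mul_le_mul_of_nonneg_right _ (by positivity)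
      refine (Real.rpow_le_rpow (abs_nonneg _) (hxb j) (by linarith)).trans_eq ?_
      simp only [b]
      rw [← Real.rpow_mul (hσ0 j)]
      congr 1
      have h2 : w * (p.toReal - u) = u * s := by
        rw [hsdef, hw]; field_simp
      rw [mul_assoc, h2]
      field_simp
  have hSw : 0 < S ^ w := Real.rpow_pos_of_pos hSpos _
  refine ⟨(S ^ w)⁻¹ • x, E.smul_mem _ hxE, ?_, ?_⟩
  · have := lpnorm_smul p hp0 (S ^ w)⁻¹ (by positivity) x
    refine le_trans (le_of_eq this) ?_
    rw [inv_mul_le_iff₀ hSw, mul_one]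
    exact hxS
  · have := lpnorm_smul q hq0.ne' (S ^ w)⁻¹ (by positivity) (fun j => σ j * x j)
    have h3 : (fun j => σ j * ((S ^ w)⁻¹ • x) j) = fun j => (S ^ w)⁻¹ * (σ j * x j) := by
      funext j
      simp only [Pi.smul_apply, smul_eq_mul]; ring
    rw [h3, this]
    have h4 : lpnorm q (fun j => σ j * x j) = S ^ (1 / u) := by
      unfold lpnorm
      rw [if_neg hqt]
    rw [h4, ← Real.rpow_neg hSpos.le, ← Real.rpow_add hSpos]
    rw [show -w + 1 / u = s by rw [hsdef]; ring]
    exact Real.rpow_le_rpow hS0n hSS hs.le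

end G17

/-- For `0 < q ≤ p ≤ ∞` and non-increasing `σ₁ ≥ … ≥ σ_m ≥ 0`
(0-indexed: `σ ⟨j-1⟩` is the paper's `σ_j`), for every `1 ≤ n ≤ m`:
`c_n(D_σ : ℓ_p^m → ℓ_q^m) = (∑_{j=n}^m σ_j^r)^{1/r}` with `1/r = 1/q - 1/p` if `q < p`,
and `c_n(D_σ : ℓ_p^m → ℓ_q^m) = σ_n` if `q = p`. -/
theorem statement17 (p q : ℝ≥0∞) (hq0 : 0 < q) (hqp : q ≤ p) (m : ℕ)
    (σ : Fin m → ℝ) (hσ0 : ∀ j, 0 ≤ σ j) (hmono : ∀ i j : Fin m, i ≤ j → σ j ≤ σ i)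
    (n : ℕ) (hn1 : 1 ≤ n) (hnm : n ≤ m) :
    gelfandFin p q σ n =
      if q = p then σ ⟨n - 1, by omega⟩
      else (∑ j : Fin m,
          if n ≤ (j : ℕ) + 1 then σ j ^ (1 / q.toReal - 1 / p.toReal)⁻¹ else 0) ^
        (1 / q.toReal - 1 / p.toReal) := by
  have hp0 : p ≠ 0 := (lt_of_lt_of_le hq0 hqp).ne'
  split_ifs with h
  · subst h
    exact G17.reduce q q hq0 hqp σ n hn1 hnm _
      (fun E hE => G17.lower_eq q hp0 σ hσ0 hmono n hn1 hnm _ rfl E hE)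
      (fun x hx hx1 => G17.upper_eq q hp0 σ hσ0 hmono n hn1 hnm _ rfl x hx hx1)
  · have hlt := lt_of_le_of_ne hqp h
    exact G17.reduce p q hq0 hqp σ n hn1 hnm _
      (fun E hE => G17.lower_lt p q hq0 hlt σ hσ0 hmono n hn1 hnm E hE)
      (fun x hx hx1 => G17.upper_lt p q hq0 hlt σ hσ0 n x hx hx1)
end
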